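/- Let q be a prime power, let S_T be a tangent splash of ℓ∞ in PG(2,q³) with centre T, and let U, V be two distinct points of S_T \ {T}. Then the unique order-q-subline of ℓ∞ containing the three points T, U, V is contained in S_T. -/

import Mathlib

namespace TangentSplashPaper

open Projectivization

/-- The point set of the projective plane `PG(2,K)`. -/
abbrev PGPoint (K : Type*) [Field K] := Projectivization K (Fin 3 → K)

/-- `ℓ` is a line of `PG(2,K)`: the set of points lying in a fixed
2-dimensional linear subspace. -/
def IsLine {K : Type*} [Field K] (ℓ : Set (PGPoint K)) : Prop :=
  ∃ W : Submodule K (Fin 3 → K), Module.finrank K W = 2 ∧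
    ℓ = {P : PGPoint K | P.submodule ≤ W}

/-- The distinguished line `ℓ∞` of `PG(2,K)`: points whose last homogeneous
coordinate vanishes. -/
def linf (K : Type*) [Field K] : Set (PGPoint K) := {P : PGPoint K | P.rep 2 = 0}

/-- The homography of `PG(2,K)` induced by a linear automorphism of `K³`;
as maps of point sets, these are exactly the elements of `PGL(3,K)`. -/
def hmap {K : Type*} [Field K] (f : (Fin 3 → K) ≃ₗ[K] (Fin 3 → K)) :
    PGPoint K → PGPoint K :=
  Projectivization.map f.toLinearMap f.injective

/-- The base subplane `PG(2,F)`: points admitting homogeneous coordinates in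
the subfield `F`. -/
def basePlane (F K : Type*) [Field F] [Field K] [Algebra F K] : Set (PGPoint K) :=
  {P : PGPoint K | ∃ v : Fin 3 → K, ∃ hv : v ≠ 0, P = Projectivization.mk K v hv ∧
    ∀ i, v i ∈ (algebraMap F K).range}

/-- An order-`q`-subplane of `PG(2,K)` (`q = |F|`): an image of `PG(2,F)`
under a homography. -/
def IsSubplane (F : Type*) {K : Type*} [Field F] [Field K] [Algebra F K]
    (S : Set (PGPoint K)) : Prop :=
  ∃ f : (Fin 3 → K) ≃ₗ[K] (Fin 3 → K), S = hmap f '' basePlane F K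

/-- An order-`q`-subline of `PG(2,K)`: the intersection of an order-`q`-subplane
with a line of `PG(2,K)` meeting it in `q+1` points. -/
def IsSubline (F : Type*) {K : Type*} [Field F] [Field K] [Algebra F K] (q : ℕ)
    (b : Set (PGPoint K)) : Prop :=
  ∃ S ℓ : Set (PGPoint K), IsSubplane F S ∧ IsLine ℓ ∧
    (S ∩ ℓ).ncard = q + 1 ∧ b = S ∩ ℓ

/-- The splash of a subplane `π` on `ℓ∞`: all points of `ℓ∞` lying on a line
of `PG(2,K)` spanned by two points of `π`. -/
def splash {K : Type*} [Field K] (π : Set (PGPoint K)) : Set (PGPoint K) :=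
  {X : PGPoint K | X ∈ linf K ∧ ∃ P Q : PGPoint K, P ∈ π ∧ Q ∈ π ∧ P ≠ Q ∧
    ∃ ℓ : Set (PGPoint K), IsLine ℓ ∧ P ∈ ℓ ∧ Q ∈ ℓ ∧ X ∈ ℓ}

/-- `S` is a tangent splash of `ℓ∞` with centre `T`: `S` is the splash of some
order-`q`-subplane meeting `ℓ∞` exactly in the point `T`. -/
def IsTangentSplash (F : Type*) {K : Type*} [Field F] [Field K] [Algebra F K]
    (S : Set (PGPoint K)) (T : PGPoint K) : Prop :=
  ∃ π : Set (PGPoint K), IsSubplane F π ∧ π ∩ linf K = {T} ∧ S = splash π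

/-- The set `t_P`: points of `ℓ∞` lying on the extension of a line of the
subplane `π` through the point `P` (lines of `π` are the lines of `PG(2,K)`
meeting `π` in `q+1` points). -/
def pencilTrace {K : Type*} [Field K] (q : ℕ) (π : Set (PGPoint K))
    (P : PGPoint K) : Set (PGPoint K) :=
  {X : PGPoint K | X ∈ linf K ∧ ∃ ℓ : Set (PGPoint K), IsLine ℓ ∧ P ∈ ℓ ∧
    (π ∩ ℓ).ncard = q + 1 ∧ X ∈ ℓ}

def Pt {K : Type*} [Field K] (x : Fin 3 → K) (P : PGPoint K) : Prop :=
  x ≠ 0 ∧ x ∈ P.submodule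

theorem pt_iff {K : Type*} [Field K] {x : Fin 3 → K} {P : PGPoint K} :
    Pt x P ↔ ∃ h : x ≠ 0, P = Projectivization.mk K x h := by
  constructor
  · rintro ⟨h, hx⟩
    refine ⟨h, ?_⟩
    induction P using Projectivization.ind with | h v hv =>
    rw [Projectivization.submodule_mk, Submodule.mem_span_singleton] at hx
    obtain ⟨a, ha⟩ := hx
    symm
    rw [Projectivization.mk_eq_mk_iff']
    exact ⟨a, ha⟩
  · rintro ⟨h, rfl⟩
    exact ⟨h, by rw [Projectivization.submodule_mk]; exact Submodule.mem_span_singleton_self x⟩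

theorem pt_rep {K : Type*} [Field K] (P : PGPoint K) : Pt P.rep P :=
  pt_iff.2 ⟨P.rep_nonzero, P.mk_rep.symm⟩

theorem Pt.eq {K : Type*} [Field K] {x : Fin 3 → K} {P Q : PGPoint K}
    (h : Pt x P) (h' : Pt x Q) : P = Q := by
  obtain ⟨_, rfl⟩ := pt_iff.1 h
  obtain ⟨_, rfl⟩ := pt_iff.1 h'
  rfl

theorem Pt.smul {K : Type*} [Field K] {x : Fin 3 → K} {P : PGPoint K}
    (h : Pt x P) {k : K} (hk : k ≠ 0) : Pt (k • x) P :=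
  ⟨smul_ne_zero hk h.1, P.submodule.smul_mem k h.2⟩

theorem Pt.exists_smul {K : Type*} [Field K] {x y : Fin 3 → K} {P : PGPoint K}
    (h : Pt x P) (h' : Pt y P) : ∃ k : K, k ≠ 0 ∧ y = k • x := by
  obtain ⟨hx, rfl⟩ := pt_iff.1 h
  have := h'.2
  rw [Projectivization.submodule_mk, Submodule.mem_span_singleton] at this
  obtain ⟨a, ha⟩ := this
  refine ⟨a, ?_, ha.symm⟩
  rintro rfl
  exact h'.1 (by rw [← ha, zero_smul])

theorem exists_pt {K : Type*} [Field K] {x : Fin 3 → K} (hx : x ≠ 0) : ∃ P, Pt x P :=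
  ⟨_, pt_iff.2 ⟨hx, rfl⟩⟩

theorem Pt.le_iff {K : Type*} [Field K] {x : Fin 3 → K} {P : PGPoint K}
    (h : Pt x P) (W : Submodule K (Fin 3 → K)) : P.submodule ≤ W ↔ x ∈ W := by
  obtain ⟨hx, rfl⟩ := pt_iff.1 h
  rw [Projectivization.submodule_mk, Submodule.span_singleton_le_iff_mem]

theorem Pt.linf_iff {K : Type*} [Field K] {x : Fin 3 → K} {P : PGPoint K}
    (h : Pt x P) : P ∈ linf K ↔ x 2 = 0 := by
  obtain ⟨k, hk, e⟩ := (pt_rep P).exists_smul h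
  rw [e]
  simp [linf, hk]

theorem Pt.indep {K : Type*} [Field K] {x y : Fin 3 → K} {P Q : PGPoint K}
    (h : Pt x P) (h' : Pt y Q) (hPQ : P ≠ Q) : LinearIndependent K ![x, y] := by
  rw [LinearIndependent.pair_iff' h.1]
  intro a ha
  apply hPQ
  refine Pt.eq (x := y) ⟨h'.1, ?_⟩ h'
  rw [← ha]
  exact P.submodule.smul_mem _ h.2

theorem Pt.ne_of_indep {K : Type*} [Field K] {x y : Fin 3 → K} {P Q : PGPoint K}
    (h : Pt x P) (h' : Pt y Q) (hi : LinearIndependent K ![x, y]) : P ≠ Q := by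
  rintro rfl
  rw [LinearIndependent.pair_iff' h.1] at hi
  obtain ⟨k, _, e⟩ := h.exists_smul h'
  exact hi k e.symm

theorem comb_of_finrank_two {K : Type*} [Field K] {W : Submodule K (Fin 3 → K)}
    (hW : Module.finrank K W = 2) {x y z : Fin 3 → K} (hx : x ∈ W) (hy : y ∈ W) (hz : z ∈ W)
    (hi : LinearIndependent K ![x, y]) : ∃ a b : K, z = a • x + b • y := by
  have hle : Submodule.span K (Set.range ![x, y]) ≤ W := by
    rw [Submodule.span_le]
    rintro _ ⟨i, rfl⟩
    fin_cases i
    · exact hx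
    · exact hy
  have := Submodule.eq_of_le_of_finrank_eq hle (by rw [finrank_span_eq_card hi, hW]; rfl)
  rw [← this] at hz
  simp only [Matrix.range_cons, Matrix.range_empty, Set.union_empty, Set.singleton_union] at hz
  obtain ⟨a, b, h⟩ := Submodule.mem_span_pair.1 hz
  exact ⟨a, b, h.symm⟩

def dk {K : Type*} [Field K] (l : Fin 3 → K) : (Fin 3 → K) →ₗ[K] K :=
  l 0 • LinearMap.proj 0 + l 1 • LinearMap.proj 1 + l 2 • LinearMap.proj 2

theorem dk_apply {K : Type*} [Field K] (l x : Fin 3 → K) :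
    dk l x = l 0 * x 0 + l 1 * x 1 + l 2 * x 2 := by
  simp [dk]

theorem dk_ne_zero {K : Type*} [Field K] {l : Fin 3 → K} (hl : l ≠ 0) : dk l ≠ 0 := by
  intro h
  apply hl
  funext i
  have := congrArg (fun g => g (Pi.single i 1)) h
  fin_cases i <;> simpa [dk_apply] using this

theorem finrank_ker_dk {K : Type*} [Field K] {l : Fin 3 → K} (hl : l ≠ 0) :
    Module.finrank K (LinearMap.ker (dk l)) = 2 := by
  have := Module.Dual.finrank_ker_add_one_of_ne_zero (f := dk l) (dk_ne_zero hl)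
  simp at this
  exact this

/-- coordinates in the subfield -/
def emb {F : Type*} (K : Type*) [Field F] [Field K] [Algebra F K] (p : Fin 3 → F) : Fin 3 → K :=
  fun i => algebraMap F K (p i)

theorem emb_ne_zero {F K : Type*} [Field F] [Field K] [Algebra F K] {p : Fin 3 → F}
    (hp : p ≠ 0) : emb K p ≠ 0 := by
  intro h
  apply hp
  funext i
  have := congrFun h i
  simpa [emb] using this

theorem mem_subplane {F K : Type*} [Field F] [Field K] [Algebra F K]
    (f : (Fin 3 → K) ≃ₗ[K] (Fin 3 → K)) (P : PGPoint K) :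
    P ∈ hmap f '' basePlane F K ↔ ∃ p : Fin 3 → F, Pt (f (emb K p)) P := by
  constructor
  · rintro ⟨_, ⟨v, hv, rfl, h⟩, rfl⟩
    choose p hp using h
    have e : emb K p = v := funext hp
    refine ⟨p, pt_iff.2 ?_⟩
    rw [e]
    exact ⟨by simpa using hv, rfl⟩
  · rintro ⟨p, hp⟩
    obtain ⟨h, rfl⟩ := pt_iff.1 hp
    have h0 : emb K p ≠ 0 := by
      intro h0
      rw [h0] at h
      simp at h
    exact ⟨Projectivization.mk K (emb K p) h0, ⟨_, h0, rfl, fun i => ⟨p i, rfl⟩⟩, rfl⟩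

theorem coeffs_mem {F K : Type*} [Field F] [Field K] [Algebra F K] {x y z : Fin 3 → F}
    (hi : LinearIndependent K ![emb K x, emb K y]) {a b : K}
    (h : emb K z = a • emb K x + b • emb K y) :
    ∃ c d : F, algebraMap F K c = a ∧ algebraMap F K d = b := by
  have key : ∃ i j : Fin 3, x i * y j - x j * y i ≠ 0 := by
    by_contra! hc
    rw [← crossProduct_ne_zero_iff_linearIndependent] at hi
    apply hi
    have h1 := congrArg (algebraMap F K) (hc 1 2)
    have h2 := congrArg (algebraMap F K) (hc 2 0)
    have h3 := congrArg (algebraMap F K) (hc 0 1)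
    simp only [map_sub, map_mul, map_zero] at h1 h2 h3
    rw [cross_apply]
    funext i
    fin_cases i
    · exact h1
    · exact h2
    · exact h3
  obtain ⟨i, j, hij⟩ := key
  have hk : algebraMap F K (x i * y j - x j * y i) ≠ 0 :=
    (map_ne_zero _).2 hij
  have ei := congrFun h i
  have ej := congrFun h j
  simp only [emb, Pi.add_apply, Pi.smul_apply, smul_eq_mul] at ei ej
  refine ⟨(z i * y j - z j * y i) / (x i * y j - x j * y i),
    (x i * z j - x j * z i) / (x i * y j - x j * y i), ?_, ?_⟩
  · rw [map_div₀, div_eq_iff hk]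
    simp only [map_sub, map_mul, ei, ej]
    ring
  · rw [map_div₀, div_eq_iff hk]
    simp only [map_sub, map_mul, ei, ej]
    ring

/-- the subline spanned by two vectors -/
def sub (F : Type*) {K : Type*} [Field F] [Field K] [Algebra F K] (e₁ e₂ : Fin 3 → K) :
    Set (PGPoint K) :=
  {P | ∃ a b : F, Pt (algebraMap F K a • e₁ + algebraMap F K b • e₂) P}

theorem sub_smul {F K : Type*} [Field F] [Field K] [Algebra F K] {e₁ e₂ : Fin 3 → K}
    {k : K} (hk : k ≠ 0) : sub F (k • e₁) (k • e₂) = sub F e₁ e₂ := by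
  ext P
  constructor
  · rintro ⟨a, b, h⟩
    refine ⟨a, b, ?_⟩
    have := h.smul (inv_ne_zero hk)
    convert this using 1
    rw [smul_comm _ k, smul_comm _ k, ← smul_add, inv_smul_smul₀ hk]
  · rintro ⟨a, b, h⟩
    refine ⟨a, b, ?_⟩
    have := h.smul hk
    convert this using 1
    rw [smul_comm _ k, smul_comm _ k, ← smul_add]

theorem sub_unique {F K : Type*} [Field F] [Field K] [Algebra F K] {e₁ e₂ g₁ g₂ : Fin 3 → K}
    {T U V : PGPoint K} (hTU : T ≠ U)
    (h1 : Pt e₁ T) (h2 : Pt e₂ U) (h3 : Pt (e₁ + e₂) V)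
    (k1 : Pt g₁ T) (k2 : Pt g₂ U) (k3 : Pt (g₁ + g₂) V) : sub F g₁ g₂ = sub F e₁ e₂ := by
  have hi := h1.indep h2 hTU
  obtain ⟨a, ha, rfl⟩ := h1.exists_smul k1
  obtain ⟨b, hb, rfl⟩ := h2.exists_smul k2
  obtain ⟨c, hc, e⟩ := h3.exists_smul k3
  rw [LinearIndependent.pair_iff] at hi
  have := hi (a - c) (b - c) (by
    rw [_root_.sub_smul, _root_.sub_smul, sub_add_sub_comm, e, smul_add, sub_self])
  obtain ⟨x, y⟩ := this
  rw [sub_eq_zero] at x y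
  subst x y
  exact sub_smul ha

theorem subline_eq {F K : Type*} [Field F] [Field K] [Algebra F K]
    {S ℓ : Set (PGPoint K)} (hS : IsSubplane F S) (hl : IsLine ℓ) {T U V : PGPoint K}
    (hT : T ∈ S ∩ ℓ) (hU : U ∈ S ∩ ℓ) (hV : V ∈ S ∩ ℓ) (hTU : T ≠ U) (hTV : T ≠ V)
    (hUV : U ≠ V) : ∃ e₁ e₂ : Fin 3 → K, Pt e₁ T ∧ Pt e₂ U ∧ Pt (e₁ + e₂) V ∧
      S ∩ ℓ = sub F e₁ e₂ := by
  obtain ⟨f, rfl⟩ := hS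
  obtain ⟨W, hW, rfl⟩ := hl
  obtain ⟨t, ht⟩ := (mem_subplane f T).1 hT.1
  obtain ⟨u, hu⟩ := (mem_subplane f U).1 hU.1
  obtain ⟨v, hv⟩ := (mem_subplane f V).1 hV.1
  have wt := (ht.le_iff W).1 hT.2
  have wu := (hu.le_iff W).1 hU.2
  have wv := (hv.le_iff W).1 hV.2
  have hi := ht.indep hu hTU
  have hi' : LinearIndependent K ![emb K t, emb K u] := by
    rw [LinearIndependent.pair_iff] at hi ⊢
    intro r s hrs
    apply hi
    rw [← map_smul, ← map_smul, ← map_add, hrs, map_zero]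
  have comb : ∀ p : Fin 3 → F, f (emb K p) ∈ W → ∃ c d : F,
      f (emb K p) = algebraMap F K c • f (emb K t) + algebraMap F K d • f (emb K u) := by
    intro p hp
    obtain ⟨a, b, hab⟩ := comb_of_finrank_two hW wt wu hp hi
    have e : emb K p = a • emb K t + b • emb K u := by
      apply f.injective
      simpa using hab
    obtain ⟨c, d, rfl, rfl⟩ := coeffs_mem hi' e
    exact ⟨c, d, hab⟩
  obtain ⟨a, b, hab⟩ := comb v wv
  have ha : a ≠ 0 := by
    rintro rfl
    apply hUV
    refine Pt.eq ⟨hv.1, ?_⟩ hv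
    rw [hab]
    simpa [-algebraMap_smul] using U.submodule.smul_mem _ hu.2
  have hb : b ≠ 0 := by
    rintro rfl
    apply hTV
    refine Pt.eq ⟨hv.1, ?_⟩ hv
    rw [hab]
    simpa [-algebraMap_smul] using T.submodule.smul_mem _ ht.2
  have ha' : algebraMap F K a ≠ 0 := by simpa using ha
  have hb' : algebraMap F K b ≠ 0 := by simpa using hb
  refine ⟨_, _, ht.smul ha', hu.smul hb', hab ▸ hv, ?_⟩
  ext P
  constructor
  · rintro ⟨h1, h2⟩
    obtain ⟨p, hp⟩ := (mem_subplane f P).1 h1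
    obtain ⟨c, d, e⟩ := comb p ((hp.le_iff W).1 h2)
    refine ⟨c / a, d / b, ?_⟩
    rw [smul_smul, smul_smul, ← map_mul, ← map_mul, div_mul_cancel₀ _ ha, div_mul_cancel₀ _ hb, ← e]
    exact hp
  · rintro ⟨c, d, h⟩
    refine ⟨(mem_subplane f P).2 ⟨fun i => c * a * t i + d * b * u i, ?_⟩, (h.le_iff W).2 ?_⟩
    · convert h using 1
      rw [← map_smul, ← map_smul, ← map_smul, ← map_smul, ← map_add]
      congr 1
      funext i
      simp [emb, mul_assoc, Algebra.smul_def]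
    · exact W.add_mem (W.smul_mem _ (W.smul_mem _ wt)) (W.smul_mem _ (W.smul_mem _ wu))

theorem sub_ncard {F K : Type*} [Field F] [Field K] [Algebra F K] [Fintype F]
    {e₁ e₂ : Fin 3 → K} (hi : LinearIndependent K ![e₁, e₂]) :
    (sub F e₁ e₂).ncard = Fintype.card F + 1 := by
  have hi2 := LinearIndependent.pair_iff.1 hi
  have h1 : e₁ ≠ 0 := hi.ne_zero 0
  have hne : ∀ c : F, algebraMap F K c • e₁ + e₂ ≠ 0 := by
    intro c h
    have := hi2 (algebraMap F K c) 1 (by simpa using h)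
    simp at this
  let g : Option F → PGPoint K := fun o => match o with
    | none => Projectivization.mk K e₁ h1
    | some c => Projectivization.mk K _ (hne c)
  have hg0 : Pt e₁ (g none) := pt_iff.2 ⟨h1, rfl⟩
  have hg1 : ∀ c, Pt (algebraMap F K c • e₁ + e₂) (g (some c)) := fun c => pt_iff.2 ⟨hne c, rfl⟩
  have hinj : Function.Injective g := by
    have aux : ∀ c, g none ≠ g (some c) := by
      intro c h
      obtain ⟨k, hk, e⟩ := hg0.exists_smul (h ▸ hg1 c)
      have := hi2 (algebraMap F K c - k) 1 (by rw [_root_.sub_smul, one_smul, sub_add_eq_add_sub, e, sub_self])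
      simp at this
    rintro (_ | c) (_ | d) h
    · rfl
    · exact absurd h (aux d)
    · exact absurd h.symm (aux c)
    · obtain ⟨k, hk, e⟩ := (hg1 c).exists_smul (h ▸ hg1 d)
      have := hi2 (algebraMap F K d - k * algebraMap F K c) (1 - k) (by
        rw [_root_.sub_smul, _root_.sub_smul, one_smul, sub_add_sub_comm, e, smul_add, smul_smul, sub_self])
      obtain ⟨x, y⟩ := this
      rw [sub_eq_zero] at y
      subst y
      rw [one_mul, sub_eq_zero] at x
      rw [(algebraMap F K).injective x]
  have hr : sub F e₁ e₂ = Set.range g := by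
    ext P
    constructor
    · rintro ⟨a, b, h⟩
      by_cases hb : b = 0
      · subst hb
        refine ⟨none, ?_⟩
        refine Pt.eq ⟨h.1, ?_⟩ h
        simpa [-algebraMap_smul] using (g none).submodule.smul_mem _ hg0.2
      · refine ⟨some (a / b), ?_⟩
        refine Pt.eq ⟨h.1, ?_⟩ h
        have hb' : algebraMap F K b ≠ 0 := by simpa using hb
        have := (g (some (a / b))).submodule.smul_mem (algebraMap F K b) (hg1 (a / b)).2
        rw [smul_add, smul_smul, ← map_mul, mul_div_cancel₀ _ hb] at this
        exact this
    · rintro ⟨_ | c, rfl⟩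
      · exact ⟨1, 0, by simpa using hg0⟩
      · exact ⟨c, 1, by simpa using hg1 c⟩
  rw [hr, ← Set.image_univ, Set.ncard_image_of_injective _ hinj, Set.ncard_univ]
  simp

theorem exists_subline {F K : Type*} [Field F] [Field K] [Algebra F K] [Fintype F]
    {e₁ e₂ : Fin 3 → K} {T U V : PGPoint K} (hTU : T ≠ U) (hTV : T ≠ V) (hUV : U ≠ V)
    (h1 : Pt e₁ T) (h2 : Pt e₂ U) (h3 : Pt (e₁ + e₂) V) :
    IsSubline F (Fintype.card F) (sub F e₁ e₂) := by
  have hi := h1.indep h2 hTU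
  have hc : crossProduct e₁ e₂ ≠ 0 := crossProduct_ne_zero_iff_linearIndependent.2 hi
  have hdk := dk_ne_zero hc
  obtain ⟨e₃, he₃⟩ : ∃ e₃, dk (crossProduct e₁ e₂) e₃ ≠ 0 := by
    by_contra! h
    exact hdk (LinearMap.ext h)
  have m1 : dk (crossProduct e₁ e₂) e₁ = 0 := by
    rw [dk_apply, cross_apply]; simp; ring
  have m2 : dk (crossProduct e₁ e₂) e₂ = 0 := by
    rw [dk_apply, cross_apply]; simp; ring
  have hi3 : LinearIndependent K ![e₁, e₂, e₃] := by
    rw [LinearIndependent.pair_iff] at hi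
    rw [Fintype.linearIndependent_iff]
    intro g hg
    simp only [Fin.sum_univ_three, Matrix.cons_val] at hg
    have := congrArg (dk (crossProduct e₁ e₂)) hg
    simp only [map_add, map_smul, m1, m2, smul_eq_mul, mul_zero, zero_add, map_zero,
      mul_eq_zero, he₃, or_false] at this
    rw [this, zero_smul, add_zero] at hg
    obtain ⟨x, y⟩ := hi _ _ hg
    intro i
    fin_cases i
    · exact x
    · exact y
    · exact this
  let B := basisOfLinearIndependentOfCardEqFinrank hi3 (by simp)
  let f : (Fin 3 → K) ≃ₗ[K] (Fin 3 → K) := B.equivFun.symm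
  have hf : ∀ x : Fin 3 → K, f x = x 0 • e₁ + x 1 • e₂ + x 2 • e₃ := by
    intro x
    simp [f, B, Module.Basis.equivFun_symm_apply, Fin.sum_univ_three]
  have hSp : IsSubplane F (hmap f '' basePlane F K) := ⟨f, rfl⟩
  have hL : IsLine {P : PGPoint K | P.submodule ≤ LinearMap.ker (dk (crossProduct e₁ e₂))} :=
    ⟨_, finrank_ker_dk hc, rfl⟩
  have hT : T ∈ (hmap f '' basePlane F K) ∩
      {P : PGPoint K | P.submodule ≤ LinearMap.ker (dk (crossProduct e₁ e₂))} := by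
    refine ⟨(mem_subplane f T).2 ⟨![1, 0, 0], ?_⟩, (h1.le_iff _).2 m1⟩
    rw [hf]; simpa [emb] using h1
  have hU : U ∈ (hmap f '' basePlane F K) ∩
      {P : PGPoint K | P.submodule ≤ LinearMap.ker (dk (crossProduct e₁ e₂))} := by
    refine ⟨(mem_subplane f U).2 ⟨![0, 1, 0], ?_⟩, (h2.le_iff _).2 m2⟩
    rw [hf]; simpa [emb] using h2
  have hV : V ∈ (hmap f '' basePlane F K) ∩
      {P : PGPoint K | P.submodule ≤ LinearMap.ker (dk (crossProduct e₁ e₂))} := by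
    refine ⟨(mem_subplane f V).2 ⟨![1, 1, 0], ?_⟩, (h3.le_iff _).2 ?_⟩
    · rw [hf]; simpa [emb] using h3
    · exact Submodule.add_mem _ m1 m2
  obtain ⟨g₁, g₂, k1, k2, k3, e⟩ := subline_eq hSp hL hT hU hV hTU hTV hUV
  have esub : sub F e₁ e₂ = _ := (sub_unique hTU k1 k2 k3 h1 h2 h3).trans e.symm
  exact ⟨_, _, hSp, hL, by rw [← esub, sub_ncard hi], esub⟩

/-- points of the splash other than the centre are cut by a line of the subplane missing
the centre -/
theorem splash_functional {F K : Type*} [Field F] [Field K] [Algebra F K]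
    {f : (Fin 3 → K) ≃ₗ[K] (Fin 3 → K)} {T X : PGPoint K}
    (hT : (hmap f '' basePlane F K) ∩ linf K = {T}) {t : Fin 3 → F} (ht : Pt (f (emb K t)) T)
    (hX : X ∈ splash (hmap f '' basePlane F K)) (hXT : X ≠ T) {x : Fin 3 → K} (hx : Pt (f x) X) :
    ∃ l : Fin 3 → F, dk (emb K l) x = 0 ∧ dk (emb K l) (emb K t) = 1 := by
  obtain ⟨hXl, P, Q, hP, hQ, hPQ, ℓ, ⟨W, hW, rfl⟩, hPl, hQl, hXW⟩ := hX
  obtain ⟨p, hp⟩ := (mem_subplane f P).1 hP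
  obtain ⟨r, hr⟩ := (mem_subplane f Q).1 hQ
  have hi := hp.indep hr hPQ
  have hi' : LinearIndependent K ![emb K p, emb K r] := by
    rw [LinearIndependent.pair_iff] at hi ⊢
    intro r s hrs
    apply hi
    rw [← map_smul, ← map_smul, ← map_add, hrs, map_zero]
  obtain ⟨a, b, hab⟩ := comb_of_finrank_two hW ((hp.le_iff W).1 hPl) ((hr.le_iff W).1 hQl)
    ((hx.le_iff W).1 hXW) hi
  have e : x = a • emb K p + b • emb K r := by
    apply f.injective
    simpa using hab
  have hc : emb K (crossProduct p r) = crossProduct (emb K p) (emb K r) := by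
    rw [cross_apply, cross_apply]
    funext i
    fin_cases i <;> simp [emb]
  have hc0 : emb K (crossProduct p r) ≠ 0 := by
    rw [hc]
    exact crossProduct_ne_zero_iff_linearIndependent.2 hi'
  have mp : dk (emb K (crossProduct p r)) (emb K p) = 0 := by
    rw [hc, dk_apply, cross_apply]; simp; ring
  have mr : dk (emb K (crossProduct p r)) (emb K r) = 0 := by
    rw [hc, dk_apply, cross_apply]; simp; ring
  have mx : dk (emb K (crossProduct p r)) x = 0 := by
    rw [e, map_add, map_smul, map_smul, mp, mr]; simp
  have hTl : T ∈ linf K := by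
    have : T ∈ (hmap f '' basePlane F K) ∩ linf K := by rw [hT]; rfl
    exact this.2
  have t2 := ht.linf_iff.1 hTl
  have x2 := hx.linf_iff.1 hXl
  have hne : dk (emb K (crossProduct p r)) (emb K t) ≠ 0 := by
    intro mt
    have hit := ht.indep hx hXT.symm
    have hit' : LinearIndependent K ![emb K t, x] := by
      rw [LinearIndependent.pair_iff] at hit ⊢
      intro r s hrs
      apply hit
      rw [← map_smul, ← map_smul, ← map_add, hrs, map_zero]
    have aux : ∀ (R : PGPoint K) (s : Fin 3 → F), Pt (f (emb K s)) R →
        dk (emb K (crossProduct p r)) (emb K s) = 0 → R = T := by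
      intro R s hs ms
      obtain ⟨c, d, h⟩ := comb_of_finrank_two (finrank_ker_dk hc0)
        (LinearMap.mem_ker.2 mt) (LinearMap.mem_ker.2 mx) (LinearMap.mem_ker.2 ms) hit'
      have : R ∈ (hmap f '' basePlane F K) ∩ linf K := by
        refine ⟨(mem_subplane f R).2 ⟨s, hs⟩, hs.linf_iff.2 ?_⟩
        rw [h]
        simp [t2, x2]
      rw [hT] at this
      exact this
    exact hPQ ((aux P p hp mp).trans (aux Q r hr mr).symm)
  have hm : dk (emb K (crossProduct p r)) (emb K t) = algebraMap F K
      (crossProduct p r 0 * t 0 + crossProduct p r 1 * t 1 + crossProduct p r 2 * t 2) := by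
    rw [dk_apply]
    simp only [emb, map_add, map_mul]
  set m := crossProduct p r 0 * t 0 + crossProduct p r 1 * t 1 + crossProduct p r 2 * t 2
  have hs : ∀ y, dk (emb K (m⁻¹ • crossProduct p r)) y =
      (algebraMap F K m)⁻¹ * dk (emb K (crossProduct p r)) y := by
    intro y
    rw [dk_apply, dk_apply]
    simp only [emb, Pi.smul_apply, smul_eq_mul, map_mul, map_inv₀]
    ring
  refine ⟨m⁻¹ • crossProduct p r, ?_, ?_⟩
  · rw [hs, mx, mul_zero]
  · rw [hs, hm]
    rw [hm] at hne
    exact inv_mul_cancel₀ hne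

theorem splash_of_functional {F K : Type*} [Field F] [Field K] [Algebra F K]
    {f : (Fin 3 → K) ≃ₗ[K] (Fin 3 → K)} {X : PGPoint K} {x : Fin 3 → K}
    (hx : Pt (f x) X) (hX : X ∈ linf K) {l : Fin 3 → F} (hl : l ≠ 0)
    (h : dk (emb K l) x = 0) : X ∈ splash (hmap f '' basePlane F K) := by
  have key : ∃ p r : Fin 3 → F, dk (emb K l) (emb K p) = 0 ∧ dk (emb K l) (emb K r) = 0 ∧
      LinearIndependent K ![emb K p, emb K r] := by
    obtain ⟨i, hi⟩ := Function.ne_iff.1 hl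
    have hi' : algebraMap F K (l i) ≠ 0 := by simpa using hi
    fin_cases i
    · refine ⟨![-l 1, l 0, 0], ![-l 2, 0, l 0], ?_, ?_, ?_⟩
      · rw [dk_apply]; simp [emb]; ring
      · rw [dk_apply]; simp [emb]; ring
      · rw [LinearIndependent.pair_iff]
        intro a b hab
        have h1 := congrFun hab 1
        have h2 := congrFun hab 2
        simp [emb] at h1 h2 hi'
        tauto
    · refine ⟨![l 1, -l 0, 0], ![0, -l 2, l 1], ?_, ?_, ?_⟩
      · rw [dk_apply]; simp [emb]; ring
      · rw [dk_apply]; simp [emb]; ring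
      · rw [LinearIndependent.pair_iff]
        intro a b hab
        have h1 := congrFun hab 0
        have h2 := congrFun hab 2
        simp [emb] at h1 h2 hi'
        tauto
    · refine ⟨![l 2, 0, -l 0], ![0, l 2, -l 1], ?_, ?_, ?_⟩
      · rw [dk_apply]; simp [emb]; ring
      · rw [dk_apply]; simp [emb]; ring
      · rw [LinearIndependent.pair_iff]
        intro a b hab
        have h1 := congrFun hab 0
        have h2 := congrFun hab 1
        simp [emb] at h1 h2 hi'
        tauto
  obtain ⟨p, r, hp, hr, hi⟩ := key
  have hif : LinearIndependent K ![f (emb K p), f (emb K r)] := by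
    rw [LinearIndependent.pair_iff] at hi ⊢
    intro a b hab
    apply hi
    apply f.injective
    simpa using hab
  obtain ⟨P, hP⟩ := exists_pt (hif.ne_zero 0)
  obtain ⟨Q, hQ⟩ := exists_pt (hif.ne_zero 1)
  simp only [Matrix.cons_val] at hP hQ
  refine ⟨hX, P, Q, (mem_subplane f P).2 ⟨p, hP⟩, (mem_subplane f Q).2 ⟨r, hQ⟩,
    hP.ne_of_indep hQ hif, _,
    ⟨(LinearMap.ker (dk (emb K l))).map (f : (Fin 3 → K) →ₗ[K] (Fin 3 → K)), ?_, rfl⟩,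
    (hP.le_iff _).2 ⟨_, hp, rfl⟩, (hQ.le_iff _).2 ⟨_, hr, rfl⟩, (hx.le_iff _).2 ⟨_, h, rfl⟩⟩
  rw [LinearEquiv.finrank_map_eq]
  exact finrank_ker_dk (emb_ne_zero hl)

/-- for distinct non-centre points `U, V` of a tangent splash `S` with
centre `T`, the unique order-`q`-subline containing `T, U, V` is contained in `S`. -/
theorem statement2 (q : ℕ) (F K : Type) [Field F] [Field K] [Fintype F] [Fintype K]
    [Algebra F K] (hF : Fintype.card F = q) (hK : Fintype.card K = q ^ 3)
    (S : Set (PGPoint K)) (T U V : PGPoint K)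
    (hS : IsTangentSplash F S T)
    (hU : U ∈ S) (hV : V ∈ S) (hUT : U ≠ T) (hVT : V ≠ T) (hUV : U ≠ V) :
    ∃ b : Set (PGPoint K),
      (IsSubline F q b ∧ T ∈ b ∧ U ∈ b ∧ V ∈ b) ∧ b ⊆ S ∧
      ∀ b' : Set (PGPoint K), (IsSubline F q b' ∧ T ∈ b' ∧ U ∈ b' ∧ V ∈ b') → b' = b := by
  subst hF
  obtain ⟨π, ⟨f, rfl⟩, hT, rfl⟩ := hS
  have hTm : T ∈ (hmap f '' basePlane F K) ∩ linf K := by rw [hT]; rfl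
  obtain ⟨t, ht⟩ := (mem_subplane f T).1 hTm.1
  obtain ⟨u, hu⟩ : ∃ u, Pt (f u) U := ⟨f.symm U.rep, by simpa using pt_rep U⟩
  have hil := ht.indep hu hUT.symm
  have t2 := ht.linf_iff.1 hTm.2
  have u2 := hu.linf_iff.1 hU.1
  have v2 := (pt_rep V).linf_iff.1 hV.1
  have hfr : Module.finrank K (LinearMap.ker (dk (K := K) ![0, 0, 1])) = 2 :=
    finrank_ker_dk (by intro h; simpa using congrFun h 2)
  obtain ⟨m, k, hmk⟩ := comb_of_finrank_two hfr (x := f (emb K t)) (y := f u) (z := V.rep)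
    (by simp [dk_apply, t2]) (by simp [dk_apply, u2]) (by simp [dk_apply, v2]) hil
  have hk : k ≠ 0 := by
    rintro rfl
    apply hVT
    symm
    refine Pt.eq ⟨(pt_rep V).1, ?_⟩ (pt_rep V)
    rw [hmk]
    simpa [-algebraMap_smul] using T.submodule.smul_mem _ ht.2
  have hm : m ≠ 0 := by
    rintro rfl
    apply hUV
    refine Pt.eq ⟨(pt_rep V).1, ?_⟩ (pt_rep V)
    rw [hmk]
    simpa [-algebraMap_smul] using U.submodule.smul_mem _ hu.2
  have hn : k⁻¹ * m ≠ 0 := mul_ne_zero (inv_ne_zero hk) hm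
  set n := k⁻¹ * m with hn_def
  have h1 : Pt (n • f (emb K t)) T := ht.smul hn
  have h3 : Pt (n • f (emb K t) + f u) V := by
    have := (pt_rep V).smul (inv_ne_zero hk)
    rw [hmk, smul_add, smul_smul, inv_smul_smul₀ hk] at this
    exact this
  have h3' : Pt (f (n • emb K t + u)) V := by simpa using h3
  obtain ⟨l, l1, l2⟩ := splash_functional hT ht hU hUT hu
  obtain ⟨r, r1, r2⟩ := splash_functional hT ht hV hVT h3'
  have r3 : dk (emb K r) u = -n := by
    rw [map_add, map_smul, r2, smul_eq_mul, mul_one] at r1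
    linear_combination r1
  refine ⟨sub F (n • f (emb K t)) (f u),
    ⟨exists_subline hUT.symm hVT.symm hUV h1 hu h3, ⟨1, 0, by simpa using h1⟩,
      ⟨0, 1, by simpa using hu⟩, ⟨1, 1, by simpa using h3⟩⟩, ?_, ?_⟩
  · rintro X ⟨a, b, hX⟩
    have hX' : Pt (f (algebraMap F K a • n • emb K t + algebraMap F K b • u)) X := by
      simpa [-algebraMap_smul] using hX
    have hd : ∀ y, dk (emb K ((b - a) • l + a • r)) y =
        (algebraMap F K b - algebraMap F K a) * dk (emb K l) y
          + algebraMap F K a * dk (emb K r) y := by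
      intro y
      simp only [dk_apply, emb, Pi.add_apply, Pi.smul_apply, smul_eq_mul, map_add, map_mul, map_sub]
      ring
    have hXl : X ∈ linf K := hX.linf_iff.2 (by simp [t2, u2])
    by_cases hb : b = 0
    · have hXT : X = T := by
        subst hb
        symm
        refine Pt.eq ⟨hX.1, ?_⟩ hX
        simpa [-algebraMap_smul] using T.submodule.smul_mem _ h1.2
      -- the centre is on the line of the subplane with functional `l - r`
      have hlr : l - r ≠ 0 := by
        intro h
        rw [sub_eq_zero] at h
        subst h
        rw [l1] at r3
        exact hn (by simpa using r3.symm)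
      rw [hXT]
      refine splash_of_functional ht hTm.2 hlr ?_
      have : dk (emb K (l - r)) (emb K t) = dk (emb K l) (emb K t) - dk (emb K r) (emb K t) := by
        simp only [dk_apply, emb, Pi.sub_apply, map_sub]
        ring
      rw [this, l2, r2, sub_self]
    · refine splash_of_functional hX' hXl (l := (b - a) • l + a • r) ?_ ?_
      · intro h0
        have := hd (emb K t)
        rw [h0, l2, r2] at this
        apply hb
        simpa [dk_apply, emb] using this.symm
      · rw [hd]
        simp only [map_add, map_smul, l1, l2, r2, r3, smul_eq_mul]
        ring
  · rintro b' ⟨⟨S', ℓ', hS', hl', -, rfl⟩, hT', hU', hV'⟩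
    obtain ⟨e₁, e₂, k1, k2, k3, e⟩ := subline_eq hS' hl' hT' hU' hV' hUT.symm hVT.symm hUV
    rw [e]
    exact sub_unique hUT.symm h1 hu h3 k1 k2 k3

end TangentSplashPaper
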